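/- Let θ ∈ (0,π), c, d ∈ ℝ, and set a = tan(θ/2). Define u₁(x) = (a/2)|x|² + d ln|x| + (d/2) ln(a²+1) + c + (x₁ + x₂) ln|x| / |x|² for x = (x₁,x₂) ∈ ℝ² with |x| > 2. Then there exist constants C > 0 and R ≥ 2 such that for all |x| ≥ R: |arctan λ₁(D²u₁(x)) + arctan λ₂(D²u₁(x)) − θ| ≤ C |x|^{−3}, and the gradient of the function x ↦ arctan λ₁(D²u₁(x)) + arctan λ₂(D²u₁(x)) has norm at most C |x|^{−4}. -/

import Mathlib

/-!
Write `a = tan (θ/2)` and `D²u₁ = aI + N`. Since `(1 + ia)²` has argument `θ`, the number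
`F(aI + N) - θ` is the argument of `(1 + iλ₁)(1 + iλ₂)(1 - ia)²`. When `N` is small this is the
arctangent of a rational function of `n = tr N` and `δ = det N` that vanishes at `n = δ = 0` and
whose denominator is close to `(1 + a²)²` (`phase_eq`). In this form the square root in the
eigenvalues, which is not differentiable where they coincide, has disappeared.

It remains to see that `n` and `δ` are `O(|x|⁻³)` with gradients `O(|x|⁻⁴)`. Every entry of `N` is
`O(|x|⁻²)` with gradient `O(|x|⁻³)` (`symbol_hessPert`), hence `δ` decays at the rate `|x|⁻⁴`. The
trace would carry a factor `ln|x|` on general grounds, but `ln|x|` and `h = (x₀ + x₁)/|x|²` are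
harmonic, so `n = 2 ∇h · ∇ln|x| = -2h/|x|²` has none (`trace_hessPert`).

The estimates are handled by the class `SymbolAtInfty k` of functions that are `O(|x|ᵏ)` with
gradient `O(|x|ᵏ⁻¹)`. It is closed under sums, products, reciprocals away from zero and `arctan`, so
both bounds of the theorem are read off from the explicit formulas.
-/

open Real MeasureTheory

noncomputable section

abbrev E2 : Type := EuclideanSpace ℝ (Fin 2)

/-- Entries of the Hessian matrix `D²u(x)`. -/
noncomputable def Hess (u : E2 → ℝ) (x : E2) : Matrix (Fin 2) (Fin 2) ℝ :=
  Matrix.of fun i j =>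
    iteratedFDeriv ℝ 2 u x ![EuclideanSpace.single i 1, EuclideanSpace.single j 1]

/-- Smaller eigenvalue of a symmetric `2×2` real matrix. -/
noncomputable def lam1 (M : Matrix (Fin 2) (Fin 2) ℝ) : ℝ :=
  ((M 0 0 + M 1 1) - Real.sqrt ((M 0 0 - M 1 1) ^ 2 + 4 * M 0 1 ^ 2)) / 2

/-- Larger eigenvalue of a symmetric `2×2` real matrix. -/
noncomputable def lam2 (M : Matrix (Fin 2) (Fin 2) ℝ) : ℝ :=
  ((M 0 0 + M 1 1) + Real.sqrt ((M 0 0 - M 1 1) ^ 2 + 4 * M 0 1 ^ 2)) / 2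

/-- The Lagrangian phase `F(M) = arctan λ₁(M) + arctan λ₂(M)`. -/
noncomputable def Phase (M : Matrix (Fin 2) (Fin 2) ℝ) : ℝ :=
  Real.arctan (lam1 M) + Real.arctan (lam2 M)

/-! ### The phase of a small perturbation of a scalar matrix -/

lemma arctan_lip (x y : ℝ) : |Real.arctan x - Real.arctan y| ≤ |x - y| := by
  have := Convex.norm_image_sub_le_of_norm_deriv_le (𝕜 := ℝ) (f := Real.arctan) (C := 1)
    (s := Set.univ) (x := y) (y := x) (fun z _ => Real.differentiableAt_arctan z) (fun z _ => by
      rw [Real.deriv_arctan, Real.norm_of_nonneg (by positivity)]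
      exact div_le_one_of_le₀ (by nlinarith [sq_nonneg z]) (by positivity)) convex_univ
    (Set.mem_univ _) (Set.mem_univ _)
  simpa using this

/-- If `M = aI + N` with `a = tan (θ/2)`, `n = tr N` and `δ = det N`, then
`F(M) - θ = arctan (Im z / Re z)` where `z = (1 + iλ₁)(1 + iλ₂)(1 - ia)²`, an expression in `n`
and `δ` alone. The hypothesis `hsmall` bounds the sum of the squared eigenvalues of `N`, which places
`F(M) - θ` in the principal branch `(-π/2, π/2)`. -/
lemma phase_eq {θ : ℝ} (hθ : θ ∈ Set.Ioo 0 π) (M : Matrix (Fin 2) (Fin 2) ℝ) {a n δ : ℝ}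
    (ha : a = Real.tan (θ / 2)) (hn : M 0 0 + M 1 1 = 2 * a + n)
    (hδ : M 0 0 * M 1 1 - M 0 1 ^ 2 = a ^ 2 + a * n + δ) (hsmall : n ^ 2 - 2 * δ ≤ 1 / 4) :
    Phase M = θ + Real.arctan ((n * (1 + a ^ 2) + 2 * a * δ) *
      ((1 + a ^ 2) ^ 2 + (a * (1 + a ^ 2) * n + (a ^ 2 - 1) * δ))⁻¹) := by
  have hatan : Real.arctan a = θ / 2 := by
    rw [ha, Real.arctan_tan] <;> linarith [hθ.1, hθ.2]
  have hsq : √((M 0 0 - M 1 1) ^ 2 + 4 * M 0 1 ^ 2) ^ 2 = (M 0 0 - M 1 1) ^ 2 + 4 * M 0 1 ^ 2 :=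
    Real.sq_sqrt (by positivity)
  have hT : lam1 M + lam2 M = 2 * a + n := by rw [← hn, lam1, lam2]; ring
  have hD : lam1 M * lam2 M = a ^ 2 + a * n + δ := by
    rw [← hδ, lam1, lam2]; linear_combination (-1 / 4) * hsq
  unfold Phase
  generalize lam1 M = p at *
  generalize lam2 M = q at *
  -- The Lipschitz bound for `arctan` puts each angle within `1/2 < π/4` of `θ/2`.
  have hsum : (p - a) ^ 2 + (q - a) ^ 2 ≤ 1 / 4 := by
    have : (p - a) ^ 2 + (q - a) ^ 2 = n ^ 2 - 2 * δ := by
      have : n = p + q - 2 * a := by linarith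
      subst this
      linear_combination -2 * hD
    linarith
  have hp : |p - a| ≤ 1 / 2 := abs_le_of_sq_le_sq (by nlinarith [sq_nonneg (q - a)]) (by norm_num)
  have hq : |q - a| ≤ 1 / 2 := abs_le_of_sq_le_sq (by nlinarith [sq_nonneg (p - a)]) (by norm_num)
  have hp' := abs_le.1 ((arctan_lip p a).trans hp)
  have hq' := abs_le.1 ((arctan_lip q a).trans hq)
  have hpi := Real.pi_gt_three
  rw [hatan] at hp' hq'
  have key : Real.tan (Real.arctan p + Real.arctan q - θ) = (n * (1 + a ^ 2) + 2 * a * δ) *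
      ((1 + a ^ 2) ^ 2 + (a * (1 + a ^ 2) * n + (a ^ 2 - 1) * δ))⁻¹ := by
    have hs (t : ℝ) : Real.sin (Real.arctan t) = t * Real.cos (Real.arctan t) := by
      rw [Real.sin_arctan, Real.cos_arctan]; ring
    have hθ2 : θ = Real.arctan a + Real.arctan a := by linarith
    rw [hθ2, Real.tan_eq_sin_div_cos, Real.sin_sub, Real.cos_sub, Real.sin_add, Real.cos_add,
      Real.sin_add, Real.cos_add, hs, hs, hs]
    have h1 := (Real.cos_arctan_pos p).ne'
    have h2 := (Real.cos_arctan_pos q).ne'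
    have h3 := (Real.cos_arctan_pos a).ne'
    rw [← div_eq_mul_inv]
    have hne : Real.cos (Real.arctan p) * Real.cos (Real.arctan q) * Real.cos (Real.arctan a) ^ 2 ≠ 0 := by
      positivity
    rw [← mul_div_mul_left (n * (1 + a ^ 2) + 2 * a * δ) _ hne]
    congr 1
    -- Both identities say that `z` is a polynomial in `λ₁ + λ₂` and `λ₁ λ₂`.
    · linear_combination (Real.cos (Real.arctan p) * Real.cos (Real.arctan q) *
        Real.cos (Real.arctan a) ^ 2) * ((1 - a ^ 2) * hT + 2 * a * hD)
    · linear_combination (Real.cos (Real.arctan p) * Real.cos (Real.arctan q) *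
        Real.cos (Real.arctan a) ^ 2) * (2 * a * hT - (1 - a ^ 2) * hD)
  rw [← key, Real.arctan_tan] <;> linarith

open Filter Asymptotics Bornology Topology

/-! ### Functions with decay of one derivative at infinity -/

/-- `f = O₁(|x|ᵏ)`: near infinity `f` is differentiable, `f = O(|x|ᵏ)` and `Df = O(|x|ᵏ⁻¹)`.
The exponent is an integer and may be positive. -/
def SymbolAtInfty (k : ℤ) (f : E2 → ℝ) : Prop :=
  (∀ᶠ x in cobounded E2, DifferentiableAt ℝ f x) ∧
  f =O[cobounded E2] (fun x => ‖x‖ ^ k) ∧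
  fderiv ℝ f =O[cobounded E2] (fun x => ‖x‖ ^ (k - 1))

lemma eventually_one_le_norm : ∀ᶠ x in cobounded E2, (1 : ℝ) ≤ ‖x‖ :=
  eventually_cobounded_le_norm 1

/-- A property that holds near infinity holds there on a neighbourhood of each point, so identities
near infinity may be differentiated. -/
lemma eventually_cobounded_nhds {p : E2 → Prop} (h : ∀ᶠ x in cobounded E2, p x) :
    ∀ᶠ x in cobounded E2, ∀ᶠ y in 𝓝 x, p y := by
  obtain ⟨R, -, hR⟩ := hasBasis_cobounded_norm.eventually_iff.1 h
  filter_upwards [tendsto_norm_cobounded_atTop.eventually_gt_atTop R] with x hx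
  filter_upwards [continuous_norm.continuousAt.eventually (lt_mem_nhds hx)] with y hy
  exact hR hy.le

lemma norm_zpow_isBigO {k l : ℤ} (h : k ≤ l) :
    (fun x : E2 => ‖x‖ ^ k) =O[cobounded E2] (fun x => ‖x‖ ^ l) := by
  refine IsBigO.of_bound 1 ?_
  filter_upwards [eventually_one_le_norm] with x hx
  rw [one_mul, Real.norm_of_nonneg (by positivity), Real.norm_of_nonneg (by positivity)]
  exact zpow_le_zpow_right₀ hx h

lemma isBigO_norm_zpow_mul {E : Type*} [NormedAddCommGroup E] [NormedSpace ℝ E]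
    {k l m : ℤ} {f : E2 → ℝ} {g : E2 → E}
    (hf : f =O[cobounded E2] (fun x => ‖x‖ ^ k)) (hg : g =O[cobounded E2] (fun x => ‖x‖ ^ l))
    (h : k + l ≤ m) : (fun x => f x • g x) =O[cobounded E2] (fun x => ‖x‖ ^ m) := by
  refine ((hf.smul hg).trans_eventuallyEq ?_).trans (norm_zpow_isBigO h)
  filter_upwards [eventually_one_le_norm] with x hx
  rw [zpow_add₀ (by linarith), smul_eq_mul]

namespace SymbolAtInfty

variable {k l m : ℤ} {f g : E2 → ℝ}

lemma mono (hf : SymbolAtInfty k f) (h : k ≤ l) : SymbolAtInfty l f :=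
  ⟨hf.1, hf.2.1.trans (norm_zpow_isBigO h), hf.2.2.trans (norm_zpow_isBigO (by omega))⟩

lemma congr (hf : SymbolAtInfty k f) (h : f =ᶠ[cobounded E2] g) : SymbolAtInfty k g := by
  have h' := eventually_cobounded_nhds h
  refine ⟨?_, hf.2.1.congr' h .rfl, hf.2.2.congr' ?_ .rfl⟩
  · filter_upwards [hf.1, h'] with x hx hy
    exact hx.congr_of_eventuallyEq (EventuallyEq.symm hy)
  · filter_upwards [h'] with x hy
    exact EventuallyEq.fderiv_eq hy

lemma const (c : ℝ) : SymbolAtInfty 0 (fun _ => c) := by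
  refine ⟨.of_forall fun x => by fun_prop, by simpa using isBigO_const_const c (one_ne_zero (α := ℝ)) _, ?_⟩
  have : fderiv ℝ (fun _ : E2 => c) = 0 := by ext1 x; simp
  rw [this]
  exact isBigO_zero _ _

lemma add (hf : SymbolAtInfty k f) (hg : SymbolAtInfty k g) :
    SymbolAtInfty k (fun x => f x + g x) := by
  refine ⟨?_, hf.2.1.add hg.2.1, (hf.2.2.add hg.2.2).congr' ?_ .rfl⟩
  · filter_upwards [hf.1, hg.1] with x h1 h2 using h1.add h2
  · filter_upwards [hf.1, hg.1] with x h1 h2 using (fderiv_add h1 h2).symm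

lemma mul' (hf : SymbolAtInfty k f) (hg : SymbolAtInfty l g) (h : k + l ≤ m) :
    SymbolAtInfty m (fun x => f x * g x) := by
  refine ⟨?_, isBigO_norm_zpow_mul hf.2.1 hg.2.1 h,
    ((isBigO_norm_zpow_mul hf.2.1 hg.2.2 (by omega)).add
      (isBigO_norm_zpow_mul hg.2.1 hf.2.2 (by omega))).congr' ?_ .rfl⟩
  · filter_upwards [hf.1, hg.1] with x h1 h2 using h1.mul h2
  · filter_upwards [hf.1, hg.1] with x h1 h2 using (fderiv_mul h1 h2).symm

lemma mul (hf : SymbolAtInfty k f) (hg : SymbolAtInfty l g) :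
    SymbolAtInfty (k + l) (fun x => f x * g x) := hf.mul' hg le_rfl

lemma const_mul (c : ℝ) (hf : SymbolAtInfty k f) : SymbolAtInfty k (fun x => c * f x) :=
  (const c).mul' hf (by omega)

lemma sub (hf : SymbolAtInfty k f) (hg : SymbolAtInfty k g) :
    SymbolAtInfty k (fun x => f x - g x) := by
  simpa [sub_eq_add_neg] using hf.add (hg.const_mul (-1))

/-- Chain rule: if `φ ∘ f = O(|x|ᵐ)` and `φ' ∘ f = O(|x|ᵐ⁻ᵏ)`, then `φ ∘ f = O₁(|x|ᵐ)`. -/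
lemma comp_of_bound {φ φ' : ℝ → ℝ} (hf : SymbolAtInfty k f)
    (hφ : ∀ᶠ x in cobounded E2, HasDerivAt φ (φ' (f x)) (f x))
    (h0 : (fun x => φ (f x)) =O[cobounded E2] (fun x => ‖x‖ ^ m))
    (h1 : (fun x => φ' (f x)) =O[cobounded E2] (fun x => ‖x‖ ^ (m - k))) :
    SymbolAtInfty m (fun x => φ (f x)) := by
  have h : ∀ᶠ x in cobounded E2, HasFDerivAt (fun x => φ (f x)) (φ' (f x) • fderiv ℝ f x) x := by
    filter_upwards [hf.1, hφ] with x h1 h2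
    exact h2.comp_hasFDerivAt x h1.hasFDerivAt
  refine ⟨h.mono fun x hx => hx.differentiableAt, h0,
    (isBigO_norm_zpow_mul h1 hf.2.2 (by omega)).congr' ?_ .rfl⟩
  filter_upwards [h] with x hx using hx.fderiv.symm

lemma tendsto_zero (hf : SymbolAtInfty k f) (hk : k < 0) :
    Tendsto f (cobounded E2) (𝓝 0) := by
  refine hf.2.1.trans_tendsto ?_
  exact (tendsto_zpow_atTop_zero hk).comp tendsto_norm_cobounded_atTop

lemma arctan (hf : SymbolAtInfty k f) :
    SymbolAtInfty k (fun x => Real.arctan (f x)) := by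
  refine hf.comp_of_bound (φ' := fun t => 1 / (1 + t ^ 2))
    (.of_forall fun x => Real.hasDerivAt_arctan _) ?_ ?_
  · refine IsBigO.trans (IsBigO.of_bound 1 (.of_forall fun x => ?_)) hf.2.1
    simpa using arctan_lip (f x) 0
  · rw [sub_self]
    refine IsBigO.of_bound 1 (.of_forall fun x => ?_)
    rw [Real.norm_of_nonneg (by positivity)]
    simp only [zpow_zero, norm_one, mul_one]
    exact div_le_one_of_le₀ (by nlinarith [sq_nonneg (f x)]) (by positivity)

lemma inv_const_add {K : ℝ} (hK : 0 < K) (hf : SymbolAtInfty k f) (hk : k < 0) :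
    SymbolAtInfty 0 (fun x => (K + f x)⁻¹) := by
  have hg : SymbolAtInfty 0 (fun x => K + f x) := (const K).add (hf.mono hk.le)
  have ht : Tendsto (fun x => K + f x) (cobounded E2) (𝓝 K) := by
    simpa using (hf.tendsto_zero hk).const_add K
  refine hg.comp_of_bound (φ := fun t => t⁻¹) (φ' := fun t => -(t ^ 2)⁻¹) ?_ ?_ ?_
  · filter_upwards [ht.eventually_ne hK.ne'] with x hx using hasDerivAt_inv hx
  · simpa using (ht.inv₀ hK.ne').isBigO_one ℝ
  · simpa using ((ht.pow 2).inv₀ (by positivity)).isBigO_one ℝ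

end SymbolAtInfty

/-! ### Two derivatives of the profile -/

/-- `|x|⁻²`, written as a rational function of the coordinates. -/
def invSq (x : E2) : ℝ := (x 0 ^ 2 + x 1 ^ 2)⁻¹

/-- `ln |x|`, written as `ln (x₀² + x₁²) / 2`, which involves no square root. -/
def logNorm (x : E2) : ℝ := Real.log (x 0 ^ 2 + x 1 ^ 2) / 2

lemma norm_sq_eq_coords (x : E2) : ‖x‖ ^ 2 = x 0 ^ 2 + x 1 ^ 2 := by
  simp [EuclideanSpace.real_norm_sq_eq]

lemma coords_sq_pos {x : E2} (hx : x ≠ 0) : 0 < x 0 ^ 2 + x 1 ^ 2 := by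
  rw [← norm_sq_eq_coords]; positivity

lemma invSq_eq (x : E2) : invSq x = ‖x‖ ^ (-2 : ℤ) := by
  rw [invSq, ← norm_sq_eq_coords]; rfl

lemma logNorm_eq (x : E2) : logNorm x = Real.log ‖x‖ := by
  rw [logNorm, ← norm_sq_eq_coords, Real.log_pow]; push_cast; ring

lemma invSq_mul {x : E2} (hx : x ≠ 0) : invSq x * (x 0 ^ 2 + x 1 ^ 2) = 1 :=
  inv_mul_cancel₀ (coords_sq_pos hx).ne'

/-- The covector `x₀ dx₀ + x₁ dx₁`, half the differential of `|x|²`. -/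
def radialForm (x : E2) : E2 →L[ℝ] ℝ :=
  x 0 • EuclideanSpace.proj 0 + x 1 • EuclideanSpace.proj 1

lemma radialForm_apply (x v : E2) : radialForm x v = x 0 * v 0 + x 1 * v 1 := by
  simp [radialForm]

lemma hasFDerivAt_coord (i : Fin 2) (x : E2) :
    HasFDerivAt (fun y : E2 => y i) (EuclideanSpace.proj (𝕜 := ℝ) i) x :=
  (EuclideanSpace.proj (𝕜 := ℝ) i).hasFDerivAt

lemma hasFDerivAt_coords_sq (x : E2) :
    HasFDerivAt (fun y : E2 => y 0 ^ 2 + y 1 ^ 2) ((2 : ℝ) • radialForm x) x := by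
  refine (((hasFDerivAt_coord 0 x).pow 2).add ((hasFDerivAt_coord 1 x).pow 2)).congr_fderiv ?_
  ext v
  simp [radialForm]
  ring

lemma hasFDerivAt_invSq {x : E2} (hx : x ≠ 0) :
    HasFDerivAt invSq ((-2 * invSq x ^ 2) • radialForm x) x := by
  refine ((hasDerivAt_inv (coords_sq_pos hx).ne').comp_hasFDerivAt x
    (hasFDerivAt_coords_sq x)).congr_fderiv ?_
  ext v
  simp [radialForm, invSq]
  ring

lemma hasFDerivAt_logNorm {x : E2} (hx : x ≠ 0) :
    HasFDerivAt logNorm (invSq x • radialForm x) x := by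
  refine (((Real.hasDerivAt_log (coords_sq_pos hx).ne').div_const 2).comp_hasFDerivAt x
    (hasFDerivAt_coords_sq x)).congr_fderiv ?_
  ext v
  simp [radialForm, invSq]
  ring

/-! ### Decay of the Hessian and of the phase -/

namespace SymbolAtInfty

lemma coord (i : Fin 2) : SymbolAtInfty 1 (fun x => x i) := by
  refine ⟨.of_forall fun x => (hasFDerivAt_coord i x).differentiableAt, ?_, ?_⟩
  · refine IsBigO.of_bound 1 (.of_forall fun x => ?_)
    simpa using PiLp.norm_apply_le x i
  · have : fderiv ℝ (fun x : E2 => x i) = fun _ => EuclideanSpace.proj (𝕜 := ℝ) i :=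
      funext fun x => (hasFDerivAt_coord i x).fderiv
    rw [this]
    simpa using isBigO_const_const _ (one_ne_zero (α := ℝ)) _

lemma coords_sq : SymbolAtInfty 2 (fun x => x 0 ^ 2 + x 1 ^ 2) := by
  simpa only [sq] using ((coord 0).mul' (coord 0) (m := 2) (by norm_num)).add
    ((coord 1).mul' (coord 1) (by norm_num))

lemma _root_.invSq_isBigO : invSq =O[cobounded E2] (fun x => ‖x‖ ^ (-2 : ℤ)) := by
  exact (isBigO_refl _ _).congr_left fun x => (invSq_eq x).symm

lemma invSq : SymbolAtInfty (-2) invSq := by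
  refine coords_sq.comp_of_bound (φ := fun t => t⁻¹) (φ' := fun t => -(t ^ 2)⁻¹) ?_
    invSq_isBigO ?_
  · filter_upwards [eventually_one_le_norm] with x hx
    exact hasDerivAt_inv (coords_sq_pos (norm_pos_iff.1 (by linarith))).ne'
  · have := (isBigO_norm_zpow_mul (m := -4) invSq_isBigO invSq_isBigO (by norm_num)).neg_left
    refine this.congr_left fun x => ?_
    simp [_root_.invSq, sq]

/-- The crude bounds `ln|x| ≤ |x|` and `|∇ ln|x|| ≤ 1` lose a power, but order `1` is all that the
Hessian estimate needs. -/
lemma logNorm : SymbolAtInfty 1 logNorm := by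
  refine coords_sq.comp_of_bound (φ := fun t => Real.log t / 2) (φ' := fun t => t⁻¹ / 2) ?_ ?_ ?_
  · filter_upwards [eventually_one_le_norm] with x hx
    exact (Real.hasDerivAt_log (coords_sq_pos (norm_pos_iff.1 (by linarith))).ne').div_const 2
  · refine IsBigO.of_bound 1 ?_
    filter_upwards [eventually_one_le_norm] with x hx
    have h := logNorm_eq x
    rw [_root_.logNorm] at h
    rw [h, Real.norm_of_nonneg (Real.log_nonneg hx)]
    simpa using (Real.log_le_sub_one_of_pos (by linarith)).trans (by linarith)
  · refine ((invSq_isBigO.const_mul_left (1 / 2)).congr_left fun x => ?_).trans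
      (norm_zpow_isBigO (by norm_num))
    simp [_root_.invSq]; ring

end SymbolAtInfty

/-- The `i`-th partial derivative of
`(a/2)|x|² + d ln|x| + (x₀ + x₁) ln|x| / |x|²`. -/
def gradComp (a d : ℝ) (i : Fin 2) (x : E2) : ℝ :=
  a * x i + d * (x i * invSq x) + logNorm x * invSq x + (x 0 + x 1) * x i * invSq x ^ 2
    - 2 * ((x 0 + x 1) * logNorm x * x i * invSq x ^ 2)

/-- The `(i, j)` entry of the Hessian of `d ln|x| + (x₀ + x₁) ln|x| / |x|²`. -/
def hessPert (d : ℝ) (i j : Fin 2) (x : E2) : ℝ :=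
  d * ((if i = j then 1 else 0) * invSq x - 2 * (x i * x j * invSq x ^ 2))
    + (x i + x j + (if i = j then 1 else 0) * (x 0 + x 1)) * invSq x ^ 2
    - 6 * ((x 0 + x 1) * x i * x j * invSq x ^ 3)
    - 2 * ((x i + x j + (if i = j then 1 else 0) * (x 0 + x 1)) * logNorm x * invSq x ^ 2)
    + 8 * ((x 0 + x 1) * logNorm x * x i * x j * invSq x ^ 3)

lemma hasFDerivAt_gradComp (a d : ℝ) (i : Fin 2) {x : E2} (hx : x ≠ 0) :
    HasFDerivAt (gradComp a d i)
      (∑ j, ((if i = j then a else 0) + hessPert d i j x) • EuclideanSpace.proj (𝕜 := ℝ) j) x := by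
  have hi := hasFDerivAt_coord i x
  have hp := (hasFDerivAt_coord 0 x).add (hasFDerivAt_coord 1 x)
  have hw := hasFDerivAt_invSq hx
  have hL := hasFDerivAt_logNorm hx
  refine (((((hi.const_mul a).add ((hi.mul hw).const_mul d)).add (hL.mul hw)).add
    ((hp.mul hi).mul (hw.pow 2))).sub
      ((((hp.mul hL).mul hi).mul (hw.pow 2)).const_mul 2)).congr_fderiv ?_
  ext v
  fin_cases i <;> simp [radialForm, hessPert] <;> ring

lemma hasFDerivAt_profile (a d K : ℝ) {u : E2 → ℝ}
    (hu : ∀ x : E2, 2 < ‖x‖ → u x = a / 2 * ‖x‖ ^ 2 + d * Real.log ‖x‖ + K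
        + (x 0 + x 1) * Real.log ‖x‖ / ‖x‖ ^ 2) {x : E2} (hx : 2 < ‖x‖) :
    HasFDerivAt u (∑ i, gradComp a d i x • EuclideanSpace.proj (𝕜 := ℝ) i) x := by
  have hx0 : x ≠ 0 := norm_pos_iff.1 (by linarith)
  have hp := (hasFDerivAt_coord 0 x).add (hasFDerivAt_coord 1 x)
  have hw := hasFDerivAt_invSq hx0
  have hL := hasFDerivAt_logNorm hx0
  have hs := hasFDerivAt_coords_sq x
  have main : HasFDerivAt (fun y : E2 => a / 2 * (y 0 ^ 2 + y 1 ^ 2) + d * logNorm y + K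
      + (y 0 + y 1) * logNorm y * invSq y)
      (∑ i, gradComp a d i x • EuclideanSpace.proj (𝕜 := ℝ) i) x := by
    refine ((((hs.const_mul (a / 2)).add (hL.const_mul d)).add_const K).add
      ((hp.mul hL).mul hw)).congr_fderiv ?_
    ext v
    simp [radialForm, gradComp]
    ring
  refine main.congr_of_eventuallyEq ?_
  filter_upwards [continuous_norm.continuousAt.eventually (lt_mem_nhds hx)] with y hy
  rw [hu y hy, logNorm_eq, ← norm_sq_eq_coords, invSq, ← norm_sq_eq_coords,
    div_eq_mul_inv (_ * _)]

lemma hess_profile (a d K : ℝ) {u : E2 → ℝ}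
    (hu : ∀ x : E2, 2 < ‖x‖ → u x = a / 2 * ‖x‖ ^ 2 + d * Real.log ‖x‖ + K
        + (x 0 + x 1) * Real.log ‖x‖ / ‖x‖ ^ 2) {x : E2} (hx : 2 < ‖x‖) (i j : Fin 2) :
    Hess u x i j = (if j = i then a else 0) + hessPert d j i x := by
  have hx0 : x ≠ 0 := norm_pos_iff.1 (by linarith)
  have h1 : fderiv ℝ u =ᶠ[𝓝 x]
      fun y => ∑ k, gradComp a d k y • (EuclideanSpace.proj k : E2 →L[ℝ] ℝ) := by
    filter_upwards [continuous_norm.continuousAt.eventually (lt_mem_nhds hx)] with y hy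
    exact (hasFDerivAt_profile a d K hu hy).fderiv
  have h2 := (HasFDerivAt.fun_sum (u := Finset.univ) fun k _ =>
    (hasFDerivAt_gradComp a d k hx0).smul_const
      (EuclideanSpace.proj k : E2 →L[ℝ] ℝ)).congr_of_eventuallyEq h1
  simp only [Hess, Matrix.of_apply, iteratedFDeriv_two_apply, h2.fderiv]
  fin_cases i <;> fin_cases j <;> simp

/-- The logarithm cancels in the trace: `ln|x|` and `h = (x₀ + x₁)/|x|²` are both harmonic and `h` is
homogeneous of degree `-1`, so `Δ(h ln|x|) = 2 ∇h · ∇ln|x| = -2h/|x|²`. -/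
lemma trace_hessPert (d : ℝ) {x : E2} (hx : x ≠ 0) :
    hessPert d 0 0 x + hessPert d 1 1 x = -2 * ((x 0 + x 1) * invSq x * invSq x) := by
  have h := invSq_mul hx
  simp only [hessPert, if_true]
  linear_combination (-2 * d * invSq x - 6 * (x 0 + x 1) * invSq x ^ 2
    + 8 * (x 0 + x 1) * logNorm x * invSq x ^ 2) * h

lemma symbol_hessPert (d : ℝ) (i j : Fin 2) : SymbolAtInfty (-2) (hessPert d i j) := by
  have hi := SymbolAtInfty.coord i
  have hj := SymbolAtInfty.coord j
  have hp := (SymbolAtInfty.coord 0).add (SymbolAtInfty.coord 1)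
  have hL := SymbolAtInfty.logNorm
  have hw := SymbolAtInfty.invSq
  have hw2 : SymbolAtInfty (-4) fun x => invSq x ^ 2 := by
    simpa only [sq] using hw.mul' hw (by norm_num)
  have hw3 : SymbolAtInfty (-6) fun x => invSq x ^ 3 := by
    simpa only [pow_succ _ 2] using hw2.mul' hw (by norm_num)
  have hq := (hi.add hj).add (hp.const_mul (if i = j then 1 else 0))
  have t1 := ((hw.const_mul (if i = j then 1 else 0)).sub
    (((hi.mul hj).mul' hw2 (m := -2) (by norm_num)).const_mul 2)).const_mul d
  have t2 := hq.mul' hw2 (m := -2) (by norm_num)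
  have t3 := (((hp.mul hi).mul hj).mul' hw3 (m := -2) (by norm_num)).const_mul 6
  have t4 := ((hq.mul hL).mul' hw2 (m := -2) (by norm_num)).const_mul 2
  have t5 := ((((hp.mul hL).mul hi).mul hj).mul' hw3 (m := -2) (by norm_num)).const_mul 8
  exact (((t1.add t2).sub t3).sub t4).add t5

/-- Outside a compact set the phase is the smooth function of `(tr N, det N)` given by `phase_eq`,
so the trace cancellation and the quadratic decay of `det N` give `F(D²u) = θ + O₁(|x|⁻³)`. -/
lemma symbol_phase {θ c d : ℝ} (hθ : θ ∈ Set.Ioo 0 π) {u : E2 → ℝ}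
    (hu : ∀ x : E2, 2 < ‖x‖ → u x = Real.tan (θ / 2) / 2 * ‖x‖ ^ 2 + d * Real.log ‖x‖ + c
        + (x 0 + x 1) * Real.log ‖x‖ / ‖x‖ ^ 2) :
    SymbolAtInfty (-3) (fun x => Phase (Hess u x) - θ) := by
  set a := Real.tan (θ / 2) with ha
  set n : E2 → ℝ := fun x => -2 * ((x 0 + x 1) * invSq x * invSq x) with hn_def
  set δ : E2 → ℝ := fun x =>
    hessPert d 0 0 x * hessPert d 1 1 x - hessPert d 1 0 x * hessPert d 1 0 x with hδ_def
  have hn : SymbolAtInfty (-3) n :=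
    ((((SymbolAtInfty.coord 0).add (SymbolAtInfty.coord 1)).mul SymbolAtInfty.invSq).mul'
      SymbolAtInfty.invSq (by norm_num)).const_mul _
  have hδ : SymbolAtInfty (-3) δ :=
    ((symbol_hessPert d 0 0).mul' (symbol_hessPert d 1 1) (by norm_num)).sub
      ((symbol_hessPert d 1 0).mul' (symbol_hessPert d 1 0) (by norm_num))
  have hsmall : ∀ᶠ x in cobounded E2, n x ^ 2 - 2 * δ x < 1 / 4 := by
    have h := ((hn.tendsto_zero (by norm_num)).pow 2).sub
      ((hδ.tendsto_zero (by norm_num)).const_mul 2)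
    exact h.eventually_lt_const (by norm_num)
  have hnum : SymbolAtInfty (-3) fun x => (1 + a ^ 2) * n x + 2 * a * δ x :=
    (hn.const_mul _).add (hδ.const_mul _)
  have hden : SymbolAtInfty (-3) fun x => a * (1 + a ^ 2) * n x + (a ^ 2 - 1) * δ x :=
    (hn.const_mul _).add (hδ.const_mul _)
  refine (hnum.mul' (hden.inv_const_add (K := (1 + a ^ 2) ^ 2) (by positivity) (by norm_num))
    (m := -3) (by norm_num)).arctan.congr ?_
  filter_upwards [hsmall, tendsto_norm_cobounded_atTop.eventually_gt_atTop 2] with x hx hx2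
  have hx0 : x ≠ 0 := norm_pos_iff.1 (by linarith)
  have htr : hessPert d 0 0 x + hessPert d 1 1 x = n x := trace_hessPert d hx0
  rw [phase_eq hθ (Hess u x) (n := n x) (δ := δ x) ha ?_ ?_ hx.le]
  · rw [mul_comm (n x), add_sub_cancel_left]
  · simp only [hess_profile a d c hu hx2, ← htr, if_true]
    ring
  · simp only [hess_profile a d c hu hx2, ← htr, if_true, hδ_def]
    simp
    ring

theorem statement16
    (θ c d : ℝ) (hθ : θ ∈ Set.Ioo 0 π)
    (u₁ : E2 → ℝ)
    (hu₁ : ∀ x : E2, 2 < ‖x‖ →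
      u₁ x = Real.tan (θ / 2) / 2 * ‖x‖ ^ 2 + d * Real.log ‖x‖
        + d / 2 * Real.log (Real.tan (θ / 2) ^ 2 + 1) + c
        + (x 0 + x 1) * Real.log ‖x‖ / ‖x‖ ^ 2) :
    ∃ C > (0:ℝ), ∃ R : ℝ, 2 ≤ R ∧ ∀ x : E2, R ≤ ‖x‖ →
      |Phase (Hess u₁ x) - θ| ≤ C * ‖x‖ ^ (-3 : ℝ)
      ∧ ‖gradient (fun y => Phase (Hess u₁ y)) x‖ ≤ C * ‖x‖ ^ (-4 : ℝ) := by
  have hsym : SymbolAtInfty (-3) (fun x => Phase (Hess u₁ x) - θ) :=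
    symbol_phase (c := d / 2 * Real.log (Real.tan (θ / 2) ^ 2 + 1) + c) (d := d) hθ
      fun x hx => by rw [hu₁ x hx]; ring
  obtain ⟨C₁, h₁⟩ := hsym.2.1.bound
  obtain ⟨C₂, h₂⟩ := hsym.2.2.bound
  obtain ⟨R, -, hR⟩ := hasBasis_cobounded_norm.eventually_iff.1 (h₁.and h₂)
  refine ⟨max 1 (max C₁ C₂), by positivity, max 2 R, le_max_left _ _, fun x hx => ?_⟩
  obtain ⟨hv, hg⟩ := hR ((le_max_right _ _).trans hx)
  have e3 : ‖x‖ ^ (-3 : ℝ) = ‖x‖ ^ (-3 : ℤ) := by rw [← Real.rpow_intCast]; norm_num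
  have e4 : ‖x‖ ^ (-4 : ℝ) = ‖x‖ ^ (-3 - 1 : ℤ) := by rw [← Real.rpow_intCast]; norm_num
  have hgrad : ‖gradient (fun y => Phase (Hess u₁ y)) x‖
      = ‖fderiv ℝ (fun y => Phase (Hess u₁ y) - θ) x‖ := by
    rw [gradient, LinearIsometryEquiv.norm_map, fderiv_sub_const]
  rw [Real.norm_of_nonneg (by positivity : (0 : ℝ) ≤ ‖x‖ ^ (-3 : ℤ)), Real.norm_eq_abs] at hv
  rw [Real.norm_of_nonneg (by positivity : (0 : ℝ) ≤ ‖x‖ ^ (-3 - 1 : ℤ))] at hg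
  rw [e3, e4, hgrad]
  constructor
  · refine hv.trans ?_
    gcongr
    exact (le_max_left _ _).trans (le_max_right _ _)
  · refine hg.trans ?_
    gcongr
    exact (le_max_right _ _).trans (le_max_right _ _)
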